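/- Let α ∈ (0,1), μ > 0, β > 0, σ > 0. For h ∈ ℝ define Cov(h) := (σ²/Γ(β)²) ∫₀^∞ ∫₀^∞ s₁^{β−1} s₂^{β−1} e^{−μ(s₁+s₂)} (∫_ℝ h_α(z,s₁) h_α(z−h,s₂) dz) ds₁ ds₂. Then for every τ ∈ ℝ, the function h ↦ e^{iτh} Cov(h) is integrable on ℝ and ∫_ℝ e^{iτh} Cov(h) dh = σ² / (μ² + 2μ|τ|^α cos(πα/2) + |τ|^{2α})^β. -/

import Mathlib

open MeasureTheory Set Real

/-- The stable subordinator density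
`h_α(z,s) = (1/(2π)) ∫_ℝ exp(−iτz − s|τ|^α e^{−iπα·sgn(τ)/2}) dτ`. -/
noncomputable def hstable (α s z : ℝ) : ℂ :=
  ((2 * Real.pi)⁻¹ : ℝ) *
    ∫ τ : ℝ, Complex.exp (-(Complex.I * τ * z) -
      ((s * |τ| ^ α : ℝ) : ℂ) *
        Complex.exp (-(Complex.I * ((Real.pi * α * Real.sign τ / 2 : ℝ) : ℂ))))

/-!
Write `λ(τ) = (-iτ)^α`, so that `h_α(·, s)` is the inverse Fourier transform of `e^{-sλ}`.
Integrating by parts twice on each half-line, the second time with the primitive of `e^{-iτz}` that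
is `O(|z|^{θ-1} τ^θ)` near `τ = 0`, where `1 - α < θ < 1`, shows `h_α(z, s) = O(|z|^{θ-2})`: the
boundary terms `±1/(iz)` from the two half-lines cancel. Hence `h_α(·, s) ∈ L¹`, with norm
independent of `s` by scaling, and Fourier inversion gives its transform `e^{-sλ(τ)}`. The
Green kernel `k(z) = ∫₀^∞ s^{β-1} e^{-μs} h_α(z, s) ds` is therefore in `L¹` with transform
`Γ(β) (μ + λ(τ))^{-β}`, by the Gamma integral with complex rate. By Fubini, `Cov` is almost
everywhere `σ²/Γ(β)²` times the autocorrelation of `k`, so its transform is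
`σ² (μ + λ(τ))^{-β} (μ + λ(-τ))^{-β} = σ² |μ + λ(τ)|^{-2β}`.
-/

open Filter Topology FourierTransform
open Complex (I)

lemma integral_eq_integral_Ioi_add_integral_Ioi_neg {E : Type*} [NormedAddCommGroup E]
    [NormedSpace ℝ E] {f : ℝ → E} (hf : Integrable f) :
    ∫ x, f x = (∫ x in Ioi (0 : ℝ), f x) + ∫ x in Ioi (0 : ℝ), f (-x) := by
  rw [integral_comp_neg_Ioi, neg_zero, add_comm,
    intervalIntegral.integral_Iic_add_Ioi hf.integrableOn hf.integrableOn]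

lemma integrable_of_continuous_of_norm_le {E : Type*} [NormedAddCommGroup E] {f : ℝ → E}
    (hf : Continuous f) {C r : ℝ} (hr : 1 < r)
    (hbound : ∀ x, x ≠ 0 → ‖f x‖ ≤ C * |x| ^ (-r)) : Integrable f := by
  have hjapanese : Integrable fun x : ℝ => (1 + ‖x‖) ^ (-r) := integrable_one_add_norm (by simpa)
  refine hf.locallyIntegrable.integrable_of_isBigO_cocompact
    (.of_bound (|C| * 2 ^ r) ?_) (hjapanese.integrableAtFilter _)
  filter_upwards [tendsto_norm_cocompact_atTop.eventually_ge_atTop 1] with x hx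
  have hx₀ : 0 < ‖x‖ := zero_lt_one.trans_le hx
  calc ‖f x‖ ≤ C * ‖x‖ ^ (-r) := hbound x (norm_pos_iff.1 hx₀)
    _ ≤ |C| * ((1 + ‖x‖) / 2) ^ (-r) := by
        gcongr ?_ * ?_
        · exact le_abs_self C
        · exact rpow_le_rpow_of_nonpos (by positivity) (by linarith) (by linarith)
    _ = |C| * 2 ^ r * ‖(1 + ‖x‖) ^ (-r)‖ := by
        rw [div_rpow (by positivity) two_pos.le, rpow_neg two_pos.le, div_inv_eq_mul,
          norm_of_nonneg (rpow_nonneg (by positivity) _)]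
        ring

section OscillatoryIntegral

variable {u u' u'' : ℝ → ℂ} {a : ℂ} {z θ : ℝ}

lemma norm_exp_neg_I_mul (τ z : ℝ) : ‖Complex.exp (-(I * τ * z))‖ = 1 := by
  simp [Complex.norm_exp]

lemma norm_exp_I_mul_sub_one_le_rpow (x : ℝ) (hθ₀ : 0 ≤ θ) (hθ₁ : θ ≤ 1) :
    ‖Complex.exp (I * x) - 1‖ ≤ 2 * |x| ^ θ := by
  rcases le_total |x| 1 with hx | hx
  · calc ‖Complex.exp (I * x) - 1‖ ≤ |x| ^ (1 : ℝ) := by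
          simpa using norm_exp_I_mul_ofReal_sub_one_le (x := x)
      _ ≤ |x| ^ θ := rpow_le_rpow_of_exponent_ge' (abs_nonneg x) hx hθ₀ hθ₁
      _ ≤ 2 * |x| ^ θ := by linarith [rpow_nonneg (abs_nonneg x) θ]
  · calc ‖Complex.exp (I * x) - 1‖ ≤ ‖Complex.exp (I * x)‖ + ‖(1 : ℂ)‖ := norm_sub_le _ _
      _ = 2 := by rw [mul_comm, Complex.norm_exp_ofReal_mul_I]; norm_num
      _ ≤ 2 * |x| ^ θ := by linarith [one_le_rpow hx hθ₀]

/-- The primitive of `τ ↦ e^{-iτz}` that vanishes at `τ = 0`, for `z ≠ 0`. -/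
noncomputable def expPrimitive (z τ : ℝ) : ℂ := (Complex.exp (-(I * τ * z)) - 1) / (-(I * z))

lemma hasDerivAt_exp_div (hz : z ≠ 0) (τ : ℝ) :
    HasDerivAt (fun τ : ℝ => Complex.exp (-(I * τ * z)) / (-(I * z)))
      (Complex.exp (-(I * τ * z))) τ := by
  have hphase : HasDerivAt (fun τ : ℝ => -(I * (τ : ℂ) * z)) (-(I * 1 * z)) τ :=
    ((((hasDerivAt_id τ).ofReal_comp).const_mul I).mul_const (z : ℂ)).neg
  have hz' : (z : ℂ) ≠ 0 := mod_cast hz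
  refine (hphase.cexp.div_const (-(I * z))).congr_deriv ?_
  field_simp

lemma hasDerivAt_expPrimitive (hz : z ≠ 0) (τ : ℝ) :
    HasDerivAt (expPrimitive z) (Complex.exp (-(I * τ * z))) τ := by
  refine ((hasDerivAt_exp_div hz τ).sub_const (1 / (-(I * z)))).congr_of_eventuallyEq
    (.of_forall fun τ => ?_)
  rw [expPrimitive, sub_div]

lemma norm_expPrimitive_le (hz : z ≠ 0) {τ : ℝ} (hτ : 0 ≤ τ) (hθ₀ : 0 ≤ θ) (hθ₁ : θ ≤ 1) :
    ‖expPrimitive z τ‖ ≤ 2 * |z| ^ (θ - 1) * τ ^ θ := by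
  have hz' : 0 < |z| := abs_pos.2 hz
  have hexp := norm_exp_I_mul_sub_one_le_rpow (-(τ * z)) hθ₀ hθ₁
  rw [abs_neg, abs_mul, abs_of_nonneg hτ, mul_rpow hτ hz'.le] at hexp
  calc ‖expPrimitive z τ‖ = ‖Complex.exp (I * (-(τ * z) : ℝ)) - 1‖ / |z| := by
        simp [expPrimitive, mul_assoc]
    _ ≤ 2 * (τ ^ θ * |z| ^ θ) / |z| := by gcongr
    _ = 2 * |z| ^ (θ - 1) * τ ^ θ := by rw [rpow_sub_one hz'.ne']; ring

lemma measurable_expPrimitive (z : ℝ) : Measurable (expPrimitive z) := by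
  unfold expPrimitive; fun_prop

lemma integrable_mul_exp_neg_I_mul {μ : Measure ℝ} (hu : Integrable u μ) (z : ℝ) :
    Integrable (fun τ : ℝ => u τ * Complex.exp (-(I * τ * z))) μ :=
  hu.mul_bdd (c := 1) (Continuous.aestronglyMeasurable (by fun_prop))
    (ae_of_all _ fun τ => (norm_exp_neg_I_mul τ z).le)

lemma integral_Ioi_mul_exp_sub_eq (hz : z ≠ 0) (hderiv : ∀ τ ∈ Ioi 0, HasDerivAt u (u' τ) τ)
    (hu : IntegrableOn u (Ioi 0)) (hu' : IntegrableOn u' (Ioi 0))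
    (hzero : Tendsto u (𝓝[>] 0) (𝓝 a)) :
    (∫ τ in Ioi (0 : ℝ), u τ * Complex.exp (-(I * τ * z))) - a / (I * z) =
      (∫ τ in Ioi (0 : ℝ), u' τ * Complex.exp (-(I * τ * z))) / (I * z) := by
  let v : ℝ → ℂ := fun τ => Complex.exp (-(I * τ * z)) / (-(I * z))
  have hv_zero : Tendsto v (𝓝[>] 0) (𝓝 (1 / (-(I * z)))) := by
    have hv : Continuous v := by fun_prop
    simpa [v] using (hv.tendsto 0).mono_left nhdsWithin_le_nhds
  have hv_bdd : ∀ τ, ‖v τ‖ = |z|⁻¹ := fun τ => by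
    simp [v, norm_exp_neg_I_mul]
  have hinfty : Tendsto (u * v) atTop (𝓝 0) :=
    (tendsto_zero_of_hasDerivAt_of_integrableOn_Ioi hderiv hu' hu).zero_mul_isBoundedUnder_le
      (isBoundedUnder_of ⟨|z|⁻¹, fun τ => (hv_bdd τ).le⟩)
  have hparts := integral_Ioi_mul_deriv_eq_deriv_mul hderiv (fun τ _ => hasDerivAt_exp_div hz τ)
    (integrable_mul_exp_neg_I_mul hu z)
    ((integrable_mul_exp_neg_I_mul hu' z).div_const (-(I * z)) |>.congr
      (ae_of_all _ fun τ => mul_div_assoc _ _ _)) (hzero.mul hv_zero) hinfty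
  simp_rw [hparts, ← mul_div_assoc, integral_div]
  ring

lemma norm_integral_Ioi_mul_exp_le (hz : z ≠ 0) (hθ₀ : 0 ≤ θ) (hθ₁ : θ ≤ 1)
    (hderiv : ∀ τ ∈ Ioi 0, HasDerivAt u (u' τ) τ) (hu : IntegrableOn u (Ioi 0))
    (hu' : IntegrableOn (fun τ => τ ^ θ * ‖u' τ‖) (Ioi 0))
    (hzero : Tendsto (fun τ => τ ^ θ * ‖u τ‖) (𝓝[>] 0) (𝓝 0)) (hinfty : Tendsto u atTop (𝓝 0)) :
    ‖∫ τ in Ioi (0 : ℝ), u τ * Complex.exp (-(I * τ * z))‖ ≤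
      2 * |z| ^ (θ - 1) * ∫ τ in Ioi (0 : ℝ), τ ^ θ * ‖u' τ‖ := by
  have hbound : ∀ (w : ℝ → ℂ) {τ : ℝ}, 0 < τ →
      ‖w τ * expPrimitive z τ‖ ≤ 2 * |z| ^ (θ - 1) * (τ ^ θ * ‖w τ‖) := fun w τ hτ => by
    calc ‖w τ * expPrimitive z τ‖ ≤ ‖w τ‖ * (2 * |z| ^ (θ - 1) * τ ^ θ) := by
          rw [norm_mul]; gcongr; exact norm_expPrimitive_le hz hτ.le hθ₀ hθ₁
      _ = 2 * |z| ^ (θ - 1) * (τ ^ θ * ‖w τ‖) := by ring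
  have hbound_ae : ∀ᵐ τ ∂volume.restrict (Ioi 0),
      ‖u' τ * expPrimitive z τ‖ ≤ 2 * |z| ^ (θ - 1) * (τ ^ θ * ‖u' τ‖) :=
    (ae_restrict_mem measurableSet_Ioi).mono fun τ hτ => hbound u' hτ
  have hu'_meas : AEStronglyMeasurable u' (volume.restrict (Ioi 0)) :=
    (stronglyMeasurable_deriv u).aestronglyMeasurable.congr <|
      (ae_restrict_mem measurableSet_Ioi).mono fun τ hτ => (hderiv τ hτ).deriv
  have hprod_zero : Tendsto (u * expPrimitive z) (𝓝[>] 0) (𝓝 0) :=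
    squeeze_zero_norm' (eventually_mem_nhdsWithin.mono fun _ => hbound u) <| by
      simpa using hzero.const_mul (2 * |z| ^ (θ - 1))
  have hprod_infty : Tendsto (u * expPrimitive z) atTop (𝓝 0) := by
    refine hinfty.zero_mul_isBoundedUnder_le
      (isBoundedUnder_of_eventually_le (a := 2 * |z| ^ ((0 : ℝ) - 1)) ?_)
    filter_upwards [eventually_ge_atTop 0] with τ hτ
    simpa using norm_expPrimitive_le hz hτ le_rfl zero_le_one
  have hparts := integral_Ioi_mul_deriv_eq_deriv_mul hderiv
    (fun τ _ => hasDerivAt_expPrimitive hz τ) (integrable_mul_exp_neg_I_mul hu z)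
    ((hu'.const_mul (2 * |z| ^ (θ - 1))).mono'
      (hu'_meas.mul (measurable_expPrimitive z).aestronglyMeasurable) hbound_ae)
    hprod_zero hprod_infty
  rw [hparts, sub_zero, zero_sub, norm_neg, ← integral_const_mul]
  exact norm_integral_le_of_norm_le (hu'.const_mul _) hbound_ae

theorem norm_integral_Ioi_mul_exp_sub_le (hz : z ≠ 0) (hθ₀ : 0 ≤ θ) (hθ₁ : θ ≤ 1)
    (hderiv : ∀ τ ∈ Ioi 0, HasDerivAt u (u' τ) τ) (hderiv' : ∀ τ ∈ Ioi 0, HasDerivAt u' (u'' τ) τ)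
    (hu : IntegrableOn u (Ioi 0)) (hu' : IntegrableOn u' (Ioi 0))
    (hu'' : IntegrableOn (fun τ => τ ^ θ * ‖u'' τ‖) (Ioi 0))
    (hzero : Tendsto u (𝓝[>] 0) (𝓝 a))
    (hzero' : Tendsto (fun τ => τ ^ θ * ‖u' τ‖) (𝓝[>] 0) (𝓝 0))
    (hinfty' : Tendsto u' atTop (𝓝 0)) :
    ‖(∫ τ in Ioi (0 : ℝ), u τ * Complex.exp (-(I * τ * z))) - a / (I * z)‖ ≤
      2 * (∫ τ in Ioi (0 : ℝ), τ ^ θ * ‖u'' τ‖) * |z| ^ (θ - 2) := by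
  have hz' : 0 < |z| := abs_pos.2 hz
  calc ‖(∫ τ in Ioi (0 : ℝ), u τ * Complex.exp (-(I * τ * z))) - a / (I * z)‖
      = ‖∫ τ in Ioi (0 : ℝ), u' τ * Complex.exp (-(I * τ * z))‖ / |z| := by
        rw [integral_Ioi_mul_exp_sub_eq hz hderiv hu hu' hzero]; simp
    _ ≤ 2 * |z| ^ (θ - 1) * (∫ τ in Ioi (0 : ℝ), τ ^ θ * ‖u'' τ‖) / |z| := by
        gcongr
        exact norm_integral_Ioi_mul_exp_le hz hθ₀ hθ₁ hderiv' hu' hu'' hzero' hinfty'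
    _ = 2 * (∫ τ in Ioi (0 : ℝ), τ ^ θ * ‖u'' τ‖) * |z| ^ (θ - 2) := by
        rw [show θ - 2 = θ - 1 - 1 by ring, rpow_sub_one hz'.ne' (θ - 1)]; ring

end OscillatoryIntegral

section StretchedExponential

variable {α p θ : ℝ} {c : ℂ}

/-- The stretched exponential `e^{-cτ^α}` with a power weight `τ^p`, considered for `τ > 0`.
Up to constants this family is closed under differentiation. -/
noncomputable def stretchedExp (α : ℝ) (c : ℂ) (p τ : ℝ) : ℂ :=
  (τ ^ p : ℝ) * Complex.exp (-(c * (τ ^ α : ℝ)))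

lemma norm_stretchedExp (α : ℝ) (c : ℂ) (p : ℝ) {τ : ℝ} (hτ : 0 ≤ τ) :
    ‖stretchedExp α c p τ‖ = τ ^ p * Real.exp (-c.re * τ ^ α) := by
  rw [stretchedExp, norm_mul, Complex.norm_real, norm_of_nonneg (rpow_nonneg hτ p),
    Complex.norm_exp]
  simp

lemma ofReal_rpow_mul_stretchedExp (α : ℝ) (c : ℂ) (p θ : ℝ) {τ : ℝ} (hτ : 0 < τ) :
    (τ ^ θ : ℝ) * stretchedExp α c p τ = stretchedExp α c (θ + p) τ := by
  rw [stretchedExp, stretchedExp, rpow_add hτ, Complex.ofReal_mul, mul_assoc]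

lemma rpow_mul_norm_eq_norm_ofReal_mul (w : ℂ) {τ : ℝ} (hτ : 0 ≤ τ) (θ : ℝ) :
    τ ^ θ * ‖w‖ = ‖(τ ^ θ : ℝ) * w‖ := by
  rw [norm_mul, Complex.norm_real, norm_of_nonneg (rpow_nonneg hτ θ)]

lemma hasDerivAt_stretchedExp (α : ℝ) (c : ℂ) (p : ℝ) {τ : ℝ} (hτ : 0 < τ) :
    HasDerivAt (stretchedExp α c p)
      (p * stretchedExp α c (p - 1) τ - c * α * stretchedExp α c (p + (α - 1)) τ) τ := by
  have hpow (q : ℝ) := (hasDerivAt_rpow_const (p := q) (Or.inl hτ.ne')).ofReal_comp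
  refine ((hpow p).mul ((hpow α).const_mul c).neg.cexp).congr_deriv ?_
  simp only [stretchedExp, rpow_add hτ p, Pi.neg_apply, Complex.ofReal_mul]
  ring

lemma integrableOn_stretchedExp (hα : 0 < α) (hc : 0 < c.re) (hp : -1 < p) :
    IntegrableOn (stretchedExp α c p) (Ioi 0) :=
  (integrableOn_rpow_mul_exp_neg_mul_rpow hp hα hc).mono'
    (Measurable.aestronglyMeasurable (by unfold stretchedExp; fun_prop)) <|
    (ae_restrict_mem measurableSet_Ioi).mono fun _ hτ => (norm_stretchedExp α c p (le_of_lt hτ)).le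

lemma integrableOn_rpow_mul_norm_deriv_stretchedExp (hα : 0 < α) (hc : 0 < c.re)
    (hp : 0 < θ + p) :
    IntegrableOn (fun τ => τ ^ θ * ‖p * stretchedExp α c (p - 1) τ -
      c * α * stretchedExp α c (p + (α - 1)) τ‖) (Ioi 0) := by
  have hint := ((integrableOn_stretchedExp hα hc (p := θ + (p - 1)) (by linarith)).const_mul
    (p : ℂ)).sub ((integrableOn_stretchedExp hα hc (p := θ + (p + (α - 1)))
      (by linarith)).const_mul (c * α))
  refine hint.norm.congr ((ae_restrict_mem measurableSet_Ioi).mono fun τ hτ => ?_)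
  simp only [Pi.sub_apply]
  rw [rpow_mul_norm_eq_norm_ofReal_mul _ (le_of_lt hτ), ← ofReal_rpow_mul_stretchedExp α c _ _ hτ,
    ← ofReal_rpow_mul_stretchedExp α c _ _ hτ]
  congr 1
  ring

lemma tendsto_stretchedExp_atTop (hα : 0 < α) (hc : 0 < c.re) (p : ℝ) :
    Tendsto (stretchedExp α c p) atTop (𝓝 0) := by
  refine tendsto_zero_iff_norm_tendsto_zero.2 <|
    ((tendsto_rpow_mul_exp_neg_mul_atTop_nhds_zero (p / α) c.re hc).comp
      (tendsto_rpow_atTop hα)).congr' ?_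
  filter_upwards [eventually_ge_atTop 0] with τ hτ
  rw [norm_stretchedExp α c p hτ, Function.comp_apply, ← rpow_mul hτ, mul_div_cancel₀ p hα.ne']

lemma tendsto_stretchedExp_zero (hα : 0 < α) (c : ℂ) (hp : 0 ≤ p) :
    Tendsto (stretchedExp α c p) (𝓝[>] 0) (𝓝 (0 ^ p : ℝ)) := by
  have hcont : Continuous (stretchedExp α c p) := by
    unfold stretchedExp
    fun_prop (disch := linarith)
  simpa [stretchedExp, zero_rpow hα.ne'] using (hcont.tendsto 0).mono_left nhdsWithin_le_nhds

lemma tendsto_rpow_mul_norm_stretchedExp_zero (hα : 0 < α) (c : ℂ) (hp : 0 < θ + p) :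
    Tendsto (fun τ => τ ^ θ * ‖stretchedExp α c p τ‖) (𝓝[>] 0) (𝓝 0) := by
  have hlim := (tendsto_stretchedExp_zero hα c hp.le).norm
  rw [zero_rpow hp.ne', Complex.ofReal_zero, norm_zero] at hlim
  refine hlim.congr' (eventually_mem_nhdsWithin.mono fun τ hτ => ?_)
  dsimp only
  rw [rpow_mul_norm_eq_norm_ofReal_mul _ (le_of_lt hτ), ofReal_rpow_mul_stretchedExp α c p θ hτ]

theorem exists_norm_integral_stretchedExp_sub_le (hα : 0 < α) (hc : 0 < c.re) (hθ₀ : 0 ≤ θ)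
    (hθα : 1 - α < θ) (hθ₁ : θ ≤ 1) :
    ∃ C : ℝ, ∀ z : ℝ, z ≠ 0 →
      ‖(∫ τ in Ioi (0 : ℝ), stretchedExp α c 0 τ * Complex.exp (-(I * τ * z))) - 1 / (I * z)‖ ≤
        C * |z| ^ (θ - 2) := by
  let u' (τ : ℝ) : ℂ := -(c * α) * stretchedExp α c (α - 1) τ
  let u'' (τ : ℝ) : ℂ := -(c * α) * ((α - 1 : ℝ) * stretchedExp α c (α - 1 - 1) τ -
    c * α * stretchedExp α c (α - 1 + (α - 1)) τ)
  have hderiv : ∀ τ ∈ Ioi 0, HasDerivAt (stretchedExp α c 0) (u' τ) τ := fun τ hτ =>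
    (hasDerivAt_stretchedExp α c 0 hτ).congr_deriv (by simp [u'])
  have hderiv' : ∀ τ ∈ Ioi 0, HasDerivAt u' (u'' τ) τ := fun τ hτ =>
    (hasDerivAt_stretchedExp α c (α - 1) hτ).const_mul (-(c * α))
  have hu'' : IntegrableOn (fun τ => τ ^ θ * ‖u'' τ‖) (Ioi 0) := by
    simpa [u'', mul_left_comm, IntegrableOn] using
      (integrableOn_rpow_mul_norm_deriv_stretchedExp (p := α - 1) (θ := θ) hα hc
        (by linarith)).const_mul ‖c * α‖
  refine ⟨2 * ∫ τ in Ioi 0, τ ^ θ * ‖u'' τ‖, fun z hz =>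
    norm_integral_Ioi_mul_exp_sub_le hz hθ₀ hθ₁ hderiv hderiv'
      (integrableOn_stretchedExp hα hc (by norm_num))
      ((integrableOn_stretchedExp hα hc (by linarith)).const_mul _) hu'' ?_ ?_ ?_⟩
  · simpa using tendsto_stretchedExp_zero hα c le_rfl
  · simpa [u', mul_left_comm] using
      (tendsto_rpow_mul_norm_stretchedExp_zero hα c (by linarith)).const_mul ‖c * α‖
  · simpa [u'] using (tendsto_stretchedExp_atTop hα hc (α - 1)).const_mul (-(c * α))

end StretchedExponential

section Transform

open scoped Convolution

/-- The transform `τ ↦ ∫ e^{iτx} f(x) dx`, i.e. the Fourier transform with the sign and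
normalization of characteristic functions. -/
noncomputable def charTransform (f : ℝ → ℂ) (τ : ℝ) : ℂ := ∫ x : ℝ, Complex.exp (I * τ * x) * f x

/-- The cross-correlation `h ↦ ∫ f(z) g(z - h) dz`, without complex conjugation of `g`. -/
noncomputable def crossCorrelation (f g : ℝ → ℂ) (h : ℝ) : ℂ := ∫ z, f z * g (z - h)

variable {f g : ℝ → ℂ}

lemma continuous_fourier (hf : Integrable f) : Continuous (𝓕 f) :=
  VectorFourier.fourierIntegral_continuous continuous_fourierChar (by apply continuous_inner) hf

lemma charTransform_inv_two_pi_mul_fourier (hf : Continuous f) (hf_int : Integrable f)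
    (hf_fourier : Integrable (𝓕 f)) (τ : ℝ) :
    charTransform (fun z => (2 * π)⁻¹ * 𝓕 f (z / (2 * π))) τ = f τ := by
  have hπ : (π : ℂ) ≠ 0 := mod_cast pi_ne_zero
  calc charTransform (fun z => (2 * π)⁻¹ * 𝓕 f (z / (2 * π))) τ
      = (2 * π)⁻¹ • ∫ z : ℝ, Complex.exp (2 * π * (z / (2 * π) : ℝ) * τ * I) *
          𝓕 f (z / (2 * π)) := by
        rw [charTransform, ← integral_smul]
        congr with z
        rw [Complex.real_smul, mul_left_comm]
        push_cast
        field_simp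
    _ = ∫ w : ℝ, Complex.exp (2 * π * w * τ * I) * 𝓕 f w := by
        rw [Measure.integral_comp_div fun w : ℝ => Complex.exp (2 * π * w * τ * I) * 𝓕 f w,
          abs_of_pos two_pi_pos, inv_smul_smul₀ two_pi_pos.ne']
    _ = 𝓕⁻ (𝓕 f) τ := by
        rw [fourierInv_eq']
        simp [mul_comm τ, mul_assoc]
    _ = f τ := congrFun (hf.fourierInv_fourier_eq hf_int hf_fourier) τ

lemma charTransform_eq_fourier (f : ℝ → ℂ) (τ : ℝ) :
    charTransform f τ = 𝓕 f (-(τ / (2 * π))) := by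
  rw [charTransform, fourier_real_eq_integral_exp_smul]
  congr with x
  rw [smul_eq_mul]
  congr 2
  have : (π : ℂ) ≠ 0 := mod_cast pi_ne_zero
  push_cast
  field_simp

lemma integrable_exp_I_mul_mul {X : Type*} [MeasurableSpace X] {m : Measure X} {u : X → ℂ}
    (hu : Integrable u m) {x : X → ℝ} (hx : Measurable x) (τ : ℝ) :
    Integrable (fun p => Complex.exp (I * τ * x p) * u p) m := by
  refine hu.bdd_mul (c := 1) (Measurable.aestronglyMeasurable (by fun_prop)) ?_
  exact .of_forall fun p => by simp [Complex.norm_exp]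

lemma charTransform_congr_ae (hfg : f =ᵐ[volume] g) (τ : ℝ) :
    charTransform f τ = charTransform g τ :=
  integral_congr_ae (hfg.mono fun x hx => by simp only [hx])

lemma charTransform_const_mul (c : ℂ) (f : ℝ → ℂ) (τ : ℝ) :
    charTransform (fun x => c * f x) τ = c * charTransform f τ := by
  simp_rw [charTransform, mul_left_comm _ c, integral_const_mul]

lemma charTransform_integral {S : Type*} [MeasurableSpace S] {ν : Measure S} [SFinite ν]
    {F : S → ℝ → ℂ} (hF : Integrable (Function.uncurry F) (ν.prod volume)) (τ : ℝ) :
    charTransform (fun x => ∫ s, F s x ∂ν) τ = ∫ s, charTransform (F s) τ ∂ν := by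
  simp_rw [charTransform, ← integral_const_mul]
  exact (integral_integral_swap (integrable_exp_I_mul_mul hF measurable_snd τ)).symm

lemma crossCorrelation_eq_convolution (f g : ℝ → ℂ) :
    crossCorrelation f g = f ⋆[ContinuousLinearMap.mul ℂ ℂ] fun z => g (-z) := by
  ext h
  simp [crossCorrelation, convolution]

lemma integrable_crossCorrelation (hf : Integrable f) (hg : Integrable g) :
    Integrable (crossCorrelation f g) := by
  rw [crossCorrelation_eq_convolution]
  exact hf.integrable_convolution _ hg.comp_neg

lemma charTransform_comp_neg (g : ℝ → ℂ) (τ : ℝ) :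
    charTransform (fun z => g (-z)) τ = charTransform g (-τ) := by
  rw [charTransform, charTransform, ← integral_neg_eq_self]
  simp

lemma charTransform_crossCorrelation (hf : Integrable f) (hg : Integrable g) (τ : ℝ) :
    charTransform (crossCorrelation f g) τ = charTransform f τ * charTransform g (-τ) := by
  rw [← charTransform_comp_neg, charTransform_eq_fourier, crossCorrelation_eq_convolution,
    fourier_mul_convolution_eq hf hg.comp_neg, ← charTransform_eq_fourier,
    ← charTransform_eq_fourier]

lemma ae_integrable_mul_comp_sub {f g : ℝ → ℝ} (hf : Integrable f) (hg : Integrable g) :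
    ∀ᵐ h, Integrable fun z => f z * g (z - h) := by
  simpa [ConvolutionExistsAt] using
    hf.ae_convolution_exists (ContinuousLinearMap.mul ℝ ℝ) hg.comp_neg

end Transform

section IntegralOfProducts

variable {S T Z : Type*} [MeasurableSpace S] [MeasurableSpace T] [MeasurableSpace Z]
  {ν : Measure S} {ρ : Measure T} {m : Measure Z} [SFinite ν] [SFinite ρ] [SFinite m]
  {F : S → Z → ℂ} {G : T → Z → ℂ}

lemma aestronglyMeasurable_mul_of_prod
    (hF : AEStronglyMeasurable (Function.uncurry F) (ν.prod m))
    (hG : AEStronglyMeasurable (Function.uncurry G) (ρ.prod m)) :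
    AEStronglyMeasurable (fun q : Z × S × T => F q.2.1 q.1 * G q.2.2 q.1) (m.prod (ν.prod ρ)) := by
  have hfst : Measure.QuasiMeasurePreserving (Prod.map (id : Z → Z) (Prod.fst : S × T → S))
      (m.prod (ν.prod ρ)) (m.prod ν) :=
    QuasiMeasurePreserving.prodMap (.id m) Measure.quasiMeasurePreserving_fst
  have hsnd : Measure.QuasiMeasurePreserving (Prod.map (id : Z → Z) (Prod.snd : S × T → T))
      (m.prod (ν.prod ρ)) (m.prod ρ) :=
    QuasiMeasurePreserving.prodMap (.id m) Measure.quasiMeasurePreserving_snd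
  exact (hF.prod_swap.comp_quasiMeasurePreserving hfst).mul
    (hG.prod_swap.comp_quasiMeasurePreserving hsnd)

lemma integrable_mul_of_prod (hF : Integrable (Function.uncurry F) (ν.prod m))
    (hG : Integrable (Function.uncurry G) (ρ.prod m))
    (hFG : Integrable (fun z => (∫ s, ‖F s z‖ ∂ν) * ∫ t, ‖G t z‖ ∂ρ) m) :
    Integrable (fun q : Z × S × T => F q.2.1 q.1 * G q.2.2 q.1) (m.prod (ν.prod ρ)) := by
  rw [integrable_prod_iff (aestronglyMeasurable_mul_of_prod hF.1 hG.1)]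
  constructor
  · filter_upwards [hF.prod_left_ae, hG.prod_left_ae] with z hFz hGz
    exact hFz.mul_prod hGz
  · refine hFG.congr (.of_forall fun z => ?_)
    simp only [norm_mul, ← integral_prod_mul]

lemma integral_integral_integral_mul (hF : Integrable (Function.uncurry F) (ν.prod m))
    (hG : Integrable (Function.uncurry G) (ρ.prod m))
    (hFG : Integrable (fun z => (∫ s, ‖F s z‖ ∂ν) * ∫ t, ‖G t z‖ ∂ρ) m) :
    ∫ s, ∫ t, ∫ z, F s z * G t z ∂m ∂ρ ∂ν = ∫ z, (∫ s, F s z ∂ν) * ∫ t, G t z ∂ρ ∂m := by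
  have hint := integrable_mul_of_prod hF hG hFG
  calc ∫ s, ∫ t, ∫ z, F s z * G t z ∂m ∂ρ ∂ν
      = ∫ p : S × T, ∫ z, F p.1 z * G p.2 z ∂m ∂(ν.prod ρ) :=
        (integral_prod _ hint.integral_prod_right).symm
    _ = ∫ z, ∫ p : S × T, F p.1 z * G p.2 z ∂(ν.prod ρ) ∂m := (integral_integral_swap hint).symm
    _ = ∫ z, (∫ s, F s z ∂ν) * ∫ t, G t z ∂ρ ∂m := by
        congr with z
        exact integral_prod_mul (fun s => F s z) (fun t => G t z)

lemma ae_integral_integral_crossCorrelation {F : S → ℝ → ℂ} {G : T → ℝ → ℂ}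
    (hF : Integrable (Function.uncurry F) (ν.prod volume))
    (hG : Integrable (Function.uncurry G) (ρ.prod volume)) :
    ∀ᵐ h, ∫ s, ∫ t, crossCorrelation (F s) (G t) h ∂ρ ∂ν =
      crossCorrelation (fun z => ∫ s, F s z ∂ν) (fun z => ∫ t, G t z ∂ρ) h := by
  filter_upwards [ae_integrable_mul_comp_sub hF.norm.integral_prod_right
    hG.norm.integral_prod_right] with h hh
  have hshift : MeasurePreserving (Prod.map id fun z => z - h) (ρ.prod volume) (ρ.prod volume) :=
    (MeasurePreserving.id ρ).prod (measurePreserving_sub_right volume h)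
  exact integral_integral_integral_mul (G := fun t z => G t (z - h)) hF
    (hshift.integrable_comp_of_integrable hG) hh

end IntegralOfProducts

section GammaIntegral

variable {a r : ℂ}

lemma norm_cpow_mul_exp_neg_mul {t : ℝ} (ht : 0 < t) (a r : ℂ) :
    ‖(t : ℂ) ^ a * Complex.exp (-(r * t))‖ = t ^ a.re * rexp (-r.re * t) := by
  rw [norm_mul, Complex.norm_cpow_eq_rpow_re_of_pos ht, Complex.norm_exp, Complex.neg_re,
    Complex.re_mul_ofReal, neg_mul]

lemma integrableOn_rpow_mul_exp_neg_mul {p b : ℝ} (hp : -1 < p) (hb : 0 < b) :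
    IntegrableOn (fun t : ℝ => t ^ p * rexp (-b * t)) (Ioi 0) := by
  simpa using integrableOn_rpow_mul_exp_neg_mul_rpow hp one_pos hb

lemma integrableOn_cpow_mul_exp_neg_mul (ha : -1 < a.re) (hr : 0 < r.re) :
    IntegrableOn (fun t : ℝ => (t : ℂ) ^ a * Complex.exp (-(r * t))) (Ioi 0) := by
  refine (integrableOn_rpow_mul_exp_neg_mul ha hr).mono'
    (Measurable.aestronglyMeasurable (by fun_prop)) ?_
  filter_upwards [ae_restrict_mem measurableSet_Ioi] with t ht
  exact (norm_cpow_mul_exp_neg_mul ht a r).le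

lemma hasDerivAt_cpow_mul_exp_neg_mul {t : ℝ} (ht : 0 < t) (a w : ℂ) :
    HasDerivAt (fun w : ℂ => (t : ℂ) ^ a * Complex.exp (-(w * t)))
      (-((t : ℂ) ^ (a + 1) * Complex.exp (-(w * t)))) w := by
  refine (((hasDerivAt_id w).mul_const (t : ℂ)).fun_neg.cexp.const_mul ((t : ℂ) ^ a)).congr_deriv ?_
  rw [Complex.cpow_add _ _ (Complex.ofReal_ne_zero.2 ht.ne'), Complex.cpow_one, id]
  ring

lemma differentiableAt_integral_cpow_mul_exp_neg_mul (ha : -1 < a.re) (hr : 0 < r.re) :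
    DifferentiableAt ℂ
      (fun r : ℂ => ∫ t : ℝ in Ioi 0, (t : ℂ) ^ a * Complex.exp (-(r * t))) r := by
  have hnhds : {w : ℂ | r.re / 2 < w.re} ∈ 𝓝 r :=
    (isOpen_lt continuous_const Complex.continuous_re).mem_nhds (half_lt_self hr)
  have hbound : ∀ᵐ t : ℝ ∂volume.restrict (Ioi 0), ∀ w ∈ {w : ℂ | r.re / 2 < w.re},
      ‖-((t : ℂ) ^ (a + 1) * Complex.exp (-(w * t)))‖ ≤
        t ^ (a + 1).re * rexp (-(r.re / 2) * t) := by
    filter_upwards [ae_restrict_mem measurableSet_Ioi] with t (ht : 0 < t) w (hw : _ < _)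
    rw [norm_neg, norm_cpow_mul_exp_neg_mul ht]
    gcongr
  have hderiv : ∀ᵐ t : ℝ ∂volume.restrict (Ioi 0), ∀ w ∈ {w : ℂ | r.re / 2 < w.re},
      HasDerivAt (fun w : ℂ => (t : ℂ) ^ a * Complex.exp (-(w * t)))
        (-((t : ℂ) ^ (a + 1) * Complex.exp (-(w * t)))) w := by
    filter_upwards [ae_restrict_mem measurableSet_Ioi] with t ht w _
    exact hasDerivAt_cpow_mul_exp_neg_mul ht a w
  have hbound_int := integrableOn_rpow_mul_exp_neg_mul (p := (a + 1).re)
    (by rw [Complex.add_re, Complex.one_re]; linarith) (half_pos hr)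
  have hmeas (b w : ℂ) : AEStronglyMeasurable
      (fun t : ℝ => (t : ℂ) ^ b * Complex.exp (-(w * t))) (volume.restrict (Ioi 0)) :=
    Measurable.aestronglyMeasurable (by fun_prop)
  exact (hasDerivAt_integral_of_dominated_loc_of_deriv_le hnhds (.of_forall (hmeas a))
    (integrableOn_cpow_mul_exp_neg_mul ha hr).integrable (hmeas (a + 1) r).neg hbound hbound_int
    hderiv).2.differentiableAt

lemma one_div_mem_slitPlane (hr : 0 < r.re) : 1 / r ∈ Complex.slitPlane := by
  have hr₀ : r ≠ 0 := Complex.slitPlane_ne_zero (.inl hr)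
  left
  rw [one_div, Complex.inv_re]
  exact div_pos hr (Complex.normSq_pos.2 hr₀)

lemma eqOn_re_pos_of_eq_ofReal {f g : ℂ → ℂ}
    (hf : DifferentiableOn ℂ f {r | 0 < r.re}) (hg : DifferentiableOn ℂ g {r | 0 < r.re})
    (hfg : ∀ x : ℝ, 0 < x → f x = g x) : EqOn f g {r | 0 < r.re} := by
  have hopen : IsOpen {r : ℂ | 0 < r.re} := isOpen_lt continuous_const Complex.continuous_re
  have hcoe : Tendsto ((↑) : ℝ → ℂ) (𝓝[≠] 1) (𝓝[≠] 1) :=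
    Complex.continuous_ofReal.continuousWithinAt.tendsto_nhdsWithin fun x hx => by simpa using hx
  refine (hf.analyticOnNhd hopen).eqOn_of_preconnected_of_frequently_eq (hg.analyticOnNhd hopen)
    (convex_halfSpace_re_gt 0).isPreconnected (z₀ := 1) (by simp) (hcoe.frequently ?_)
  exact (eventually_nhdsWithin_of_eventually_nhds
    ((eventually_gt_nhds zero_lt_one).mono hfg)).frequently

theorem integral_cpow_mul_exp_neg_mul_of_re_pos (ha : 0 < a.re) (hr : 0 < r.re) :
    ∫ t : ℝ in Ioi 0, (t : ℂ) ^ (a - 1) * Complex.exp (-(r * t)) =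
      (1 / r) ^ a * Complex.Gamma a := by
  refine eqOn_re_pos_of_eq_ofReal
    (f := fun r => ∫ t : ℝ in Ioi 0, (t : ℂ) ^ (a - 1) * Complex.exp (-(r * t)))
    (g := fun r => (1 / r) ^ a * Complex.Gamma a) (fun w hw => ?_)
    (fun w (hw : 0 < w.re) => ?_) (fun x => Complex.integral_cpow_mul_exp_neg_mul_Ioi ha) hr
  · refine (differentiableAt_integral_cpow_mul_exp_neg_mul ?_ hw).differentiableWithinAt
    rw [Complex.sub_re, Complex.one_re]
    linarith
  · have hw₀ : w ≠ 0 := Complex.slitPlane_ne_zero (.inl hw)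
    have hinv : DifferentiableAt ℂ (fun w : ℂ => 1 / w) w := by fun_prop (disch := exact hw₀)
    exact ((hinv.cpow_const (one_div_mem_slitPlane hw)).mul_const _).differentiableWithinAt

lemma one_div_cpow_mul_one_div_conj_cpow (hr : 0 < r.re) (β : ℝ) :
    (1 / r) ^ (β : ℂ) * (1 / starRingEnd ℂ r) ^ (β : ℂ) =
      ((1 / Complex.normSq r ^ β : ℝ) : ℂ) := by
  have hconj := Complex.conj_cpow (1 / r) (β : ℂ)
    (Complex.slitPlane_arg_ne_pi (one_div_mem_slitPlane hr))
  rw [Complex.conj_ofReal, map_div₀, map_one] at hconj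
  rw [hconj, Complex.mul_conj, Complex.normSq_eq_norm_sq, Complex.norm_cpow_real, norm_div,
    norm_one, Complex.normSq_eq_norm_sq, ← rpow_pow_comm (norm_nonneg r),
    div_rpow zero_le_one (norm_nonneg r), one_rpow, div_pow, one_pow]

end GammaIntegral

section StableSymbol

variable {α : ℝ}

/-- The symbol `(-iτ)^α` of the fractional derivative `d^α/d(-t)^α`, with the principal branch. -/
noncomputable def stableSymbol (α τ : ℝ) : ℂ := (-(I * τ)) ^ (α : ℂ)

lemma continuous_stableSymbol (hα : 0 < α) : Continuous (stableSymbol α) :=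
  continuous_iff_continuousAt.2 fun τ =>
    ContinuousAt.comp (g := fun w : ℂ => w ^ (α : ℂ))
      (Complex.continuousAt_cpow_const_of_re_pos (Or.inl (by simp)) (by simpa using hα))
      (by fun_prop)

lemma stableSymbol_mul (hα : α ≠ 0) {r : ℝ} (hr : 0 < r) (τ : ℝ) :
    stableSymbol α (r * τ) = (r ^ α : ℝ) * stableSymbol α τ := by
  rcases eq_or_ne τ 0 with rfl | hτ
  · simp [stableSymbol, hα]
  have hτ' : -(I * τ) ≠ 0 := by simpa using hτ
  have hscale : -(I * (r * τ : ℝ)) = r * -(I * τ) := by push_cast; ring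
  rw [stableSymbol, stableSymbol, hscale, Complex.cpow_def_of_ne_zero (by simp [hr.ne', hτ]),
    Complex.cpow_def_of_ne_zero hτ', Complex.log_ofReal_mul hr hτ', add_mul, Complex.exp_add,
    rpow_def_of_pos hr]
  push_cast
  rfl

lemma stableSymbol_one (α : ℝ) :
    stableSymbol α 1 = Complex.exp (-(I * (π * α / 2 : ℝ))) := by
  rw [stableSymbol, Complex.cpow_def_of_ne_zero (by simp), Complex.ofReal_one, mul_one,
    Complex.log_neg_I]
  push_cast; ring_nf

lemma stableSymbol_neg_one (α : ℝ) :
    stableSymbol α (-1) = Complex.exp (I * (π * α / 2 : ℝ)) := by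
  rw [stableSymbol, Complex.cpow_def_of_ne_zero (by simp), Complex.ofReal_neg, Complex.ofReal_one,
    mul_neg, mul_one, neg_neg, Complex.log_I]
  push_cast; ring_nf

lemma stableSymbol_of_pos (hα : α ≠ 0) {τ : ℝ} (hτ : 0 < τ) :
    stableSymbol α τ = (τ ^ α : ℝ) * stableSymbol α 1 := by
  simpa using stableSymbol_mul hα hτ 1

lemma stableSymbol_neg_of_pos (hα : α ≠ 0) {τ : ℝ} (hτ : 0 < τ) :
    stableSymbol α (-τ) = (τ ^ α : ℝ) * stableSymbol α (-1) := by
  simpa using stableSymbol_mul hα hτ (-1)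

lemma stableSymbol_eq (hα : α ≠ 0) (τ : ℝ) :
    stableSymbol α τ = (|τ| ^ α : ℝ) * Complex.exp (-(I * (π * α * Real.sign τ / 2 : ℝ))) := by
  rcases lt_trichotomy τ 0 with hτ | rfl | hτ
  · rw [← neg_neg τ, stableSymbol_neg_of_pos hα (neg_pos.2 hτ), stableSymbol_neg_one, neg_neg,
      abs_of_neg hτ, sign_of_neg hτ]
    push_cast; ring_nf
  · simp [stableSymbol, hα]
  · rw [stableSymbol_of_pos hα hτ, stableSymbol_one, abs_of_pos hτ, sign_of_pos hτ, mul_one]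

lemma stableSymbol_neg (α τ : ℝ) :
    stableSymbol α (-τ) = (starRingEnd ℂ) (stableSymbol α τ) := by
  have harg : (-(I * τ)).arg ≠ π := fun h => by
    have := Complex.arg_eq_pi_iff.1 h
    simp at this
  simpa [stableSymbol] using Complex.conj_cpow (-(I * τ)) α harg

lemma norm_stableSymbol (α τ : ℝ) : ‖stableSymbol α τ‖ = |τ| ^ α := by
  simp [stableSymbol, Complex.norm_cpow_real]

lemma re_stableSymbol (hα : α ≠ 0) (τ : ℝ) :
    (stableSymbol α τ).re = |τ| ^ α * cos (π * α / 2) := by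
  have habs : (stableSymbol α τ).re = (stableSymbol α |τ|).re := by
    rcases abs_choice τ with h | h <;> simp [h, stableSymbol_neg]
  rcases eq_or_ne τ 0 with rfl | hτ
  · simp [stableSymbol, hα]
  · rw [habs, stableSymbol_of_pos hα (abs_pos.2 hτ), stableSymbol_one, Complex.re_ofReal_mul,
      Complex.exp_re]
    simp

lemma normSq_add_stableSymbol (hα : α ≠ 0) (μ τ : ℝ) :
    Complex.normSq (μ + stableSymbol α τ) =
      μ ^ 2 + 2 * μ * |τ| ^ α * cos (π * α / 2) + |τ| ^ (2 * α) := by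
  rw [Complex.normSq_add, Complex.normSq_ofReal, Complex.normSq_eq_norm_sq, norm_stableSymbol,
    Complex.re_ofReal_mul, Complex.conj_re, re_stableSymbol hα, mul_comm 2 α,
    rpow_mul (abs_nonneg τ), rpow_two]
  ring

end StableSymbol

section StableDensity

variable {α s : ℝ}

/-- The characteristic function `τ ↦ e^{-s(-iτ)^α}` of the stable density `h_α(·, s)`. -/
noncomputable def stableCharFun (α s τ : ℝ) : ℂ := Complex.exp (-(s * stableSymbol α τ))

lemma continuous_stableCharFun (hα : 0 < α) : Continuous (stableCharFun α s) := by
  have := continuous_stableSymbol hα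
  unfold stableCharFun
  fun_prop

lemma stableCharFun_of_pos (hα : α ≠ 0) (s : ℝ) {τ : ℝ} (hτ : 0 < τ) :
    stableCharFun α s τ = stretchedExp α (s * stableSymbol α 1) 0 τ := by
  rw [stableCharFun, stableSymbol_of_pos hα hτ, stretchedExp, rpow_zero, Complex.ofReal_one,
    one_mul, mul_right_comm, mul_assoc]

lemma stableCharFun_neg_of_pos (hα : α ≠ 0) (s : ℝ) {τ : ℝ} (hτ : 0 < τ) :
    stableCharFun α s (-τ) = stretchedExp α (s * stableSymbol α (-1)) 0 τ := by
  rw [stableCharFun, stableSymbol_neg_of_pos hα hτ, stretchedExp, rpow_zero, Complex.ofReal_one,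
    one_mul, mul_right_comm, mul_assoc]

lemma re_mul_stableSymbol_pos (hα : α ≠ 0) (hcos : 0 < cos (π * α / 2)) (hs : 0 < s) {τ : ℝ}
    (hτ : τ ≠ 0) : 0 < (s * stableSymbol α τ).re := by
  have := rpow_pos_of_pos (abs_pos.2 hτ) α
  rw [Complex.re_ofReal_mul, re_stableSymbol hα]
  positivity

lemma integrable_stableCharFun (hα : 0 < α) (hcos : 0 < cos (π * α / 2)) (hs : 0 < s) :
    Integrable (stableCharFun α s) := by
  have hstretched (τ : ℝ) (hτ : τ ≠ 0) :
      IntegrableOn (stretchedExp α (s * stableSymbol α τ) 0) (Ioi 0) :=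
    integrableOn_stretchedExp hα (re_mul_stableSymbol_pos hα.ne' hcos hs hτ) (by norm_num)
  have hright : IntegrableOn (stableCharFun α s) (Ioi 0) :=
    IntegrableOn.congr_fun (hstretched 1 one_ne_zero)
      (fun _ hτ => (stableCharFun_of_pos hα.ne' s hτ).symm) measurableSet_Ioi
  have hleft : IntegrableOn (fun τ => stableCharFun α s (-τ)) (Ioi 0) :=
    IntegrableOn.congr_fun (hstretched (-1) (by norm_num))
      (fun _ hτ => (stableCharFun_neg_of_pos hα.ne' s hτ).symm) measurableSet_Ioi
  have hleft' : IntegrableOn (stableCharFun α s) (Iic 0) := by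
    rw [integrableOn_Iic_iff_integrableOn_Iio (by simp)]
    rw [← neg_zero] at hleft
    simpa only [neg_neg] using hleft.comp_neg_Iio
  rw [← integrableOn_univ, ← Iic_union_Ioi (a := (0 : ℝ))]
  exact hleft'.union hright

lemma hstable_eq_integral (hα : α ≠ 0) (s z : ℝ) :
    hstable α s z =
      (2 * π)⁻¹ * ∫ τ : ℝ, stableCharFun α s τ * Complex.exp (-(I * τ * z)) := by
  simp only [hstable, stableCharFun, stableSymbol_eq hα, ← Complex.exp_add]
  push_cast
  congr! 4
  ring

lemma hstable_eq_fourier (hα : α ≠ 0) (s z : ℝ) :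
    hstable α s z = (2 * π)⁻¹ * 𝓕 (stableCharFun α s) (z / (2 * π)) := by
  rw [hstable_eq_integral hα, fourier_real_eq_integral_exp_smul]
  congr 2 with τ
  rw [smul_eq_mul, mul_comm]
  congr 2
  have : (π : ℂ) ≠ 0 := mod_cast pi_ne_zero
  push_cast
  field_simp

lemma continuous_hstable (hα : 0 < α) (hcos : 0 < cos (π * α / 2)) (hs : 0 < s) :
    Continuous (hstable α s) := by
  have := continuous_fourier (integrable_stableCharFun hα hcos hs)
  rw [funext (hstable_eq_fourier hα.ne' s)]
  fun_prop

lemma hstable_eq_integral_stretchedExp (hα : 0 < α) (hcos : 0 < cos (π * α / 2)) (hs : 0 < s)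
    (z : ℝ) :
    hstable α s z = (2 * π)⁻¹ *
      ((∫ τ in Ioi (0 : ℝ), stretchedExp α (s * stableSymbol α 1) 0 τ *
          Complex.exp (-(I * τ * z))) +
        ∫ τ in Ioi (0 : ℝ), stretchedExp α (s * stableSymbol α (-1)) 0 τ *
          Complex.exp (-(I * τ * (-z : ℝ)))) := by
  rw [hstable_eq_integral hα.ne', integral_eq_integral_Ioi_add_integral_Ioi_neg
    (integrable_mul_exp_neg_I_mul (integrable_stableCharFun hα hcos hs) z)]
  congr 2
  · refine setIntegral_congr_fun measurableSet_Ioi fun τ hτ => ?_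
    rw [stableCharFun_of_pos hα.ne' s hτ]
  · refine setIntegral_congr_fun measurableSet_Ioi fun τ hτ => ?_
    rw [stableCharFun_neg_of_pos hα.ne' s hτ]
    push_cast
    ring_nf

-- The boundary terms `±1/(iz)` of the two half-lines cancel.
lemma exists_norm_hstable_le (hα : 0 < α) (hcos : 0 < cos (π * α / 2)) (hs : 0 < s) :
    ∃ C r : ℝ, 1 < r ∧ ∀ z : ℝ, z ≠ 0 → ‖hstable α s z‖ ≤ C * |z| ^ (-r) := by
  obtain ⟨θ, hθ, hθ₁⟩ := exists_between (max_lt zero_lt_one (sub_lt_self 1 hα))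
  obtain ⟨hθ₀, hθα⟩ := max_lt_iff.1 hθ
  obtain ⟨C₁, hC₁⟩ := exists_norm_integral_stretchedExp_sub_le hα
    (re_mul_stableSymbol_pos hα.ne' hcos hs one_ne_zero) hθ₀.le hθα hθ₁.le
  obtain ⟨C₂, hC₂⟩ := exists_norm_integral_stretchedExp_sub_le hα
    (re_mul_stableSymbol_pos hα.ne' hcos hs (neg_ne_zero.2 one_ne_zero)) hθ₀.le hθα hθ₁.le
  refine ⟨(2 * π)⁻¹ * (C₁ + C₂), 2 - θ, by linarith, fun z hz => ?_⟩
  have hright := hC₁ z hz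
  have hleft := hC₂ (-z) (neg_ne_zero.2 hz)
  rw [abs_neg] at hleft
  rw [hstable_eq_integral_stretchedExp hα hcos hs, norm_mul, mul_assoc, add_mul, neg_sub]
  gcongr
  · simp [abs_of_pos pi_pos]
  · refine (norm_add_le_of_le hright hleft).trans_eq' ?_
    push_cast
    congr 1
    ring

theorem integrable_hstable (hα : 0 < α) (hcos : 0 < cos (π * α / 2)) (hs : 0 < s) :
    Integrable (hstable α s) :=
  let ⟨_, _, hr, hbound⟩ := exists_norm_hstable_le hα hcos hs
  integrable_of_continuous_of_norm_le (continuous_hstable hα hcos hs) hr hbound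

lemma stableCharFun_one_mul (hα : α ≠ 0) (hs : 0 < s) (τ : ℝ) :
    stableCharFun α 1 (s ^ α⁻¹ * τ) = stableCharFun α s τ := by
  rw [stableCharFun, stableCharFun, stableSymbol_mul hα (rpow_pos_of_pos hs _), ← rpow_mul hs.le,
    inv_mul_cancel₀ hα, rpow_one, Complex.ofReal_one, one_mul]

lemma hstable_mul (hα : α ≠ 0) (hs : 0 < s) (z : ℝ) :
    hstable α s (s ^ α⁻¹ * z) = (s ^ α⁻¹)⁻¹ * hstable α 1 z := by
  have hr : 0 < s ^ α⁻¹ := rpow_pos_of_pos hs _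
  have hscale := Measure.integral_comp_mul_left
    (fun τ : ℝ => stableCharFun α 1 τ * Complex.exp (-(I * τ * z))) (s ^ α⁻¹)
  rw [abs_of_pos (inv_pos.2 hr), Complex.real_smul] at hscale
  rw [hstable_eq_integral hα, hstable_eq_integral hα, mul_left_comm, ← hscale]
  congr 2 with τ
  rw [stableCharFun_one_mul hα hs]
  push_cast
  ring_nf

lemma integral_norm_hstable (hα : α ≠ 0) (hs : 0 < s) :
    ∫ z, ‖hstable α s z‖ = ∫ z, ‖hstable α 1 z‖ := by
  have hr : 0 < s ^ α⁻¹ := rpow_pos_of_pos hs _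
  have hscale := Measure.integral_comp_mul_left (fun z : ℝ => ‖hstable α s z‖) (s ^ α⁻¹)
  simp_rw [hstable_mul hα hs, norm_mul, integral_const_mul, Complex.norm_real,
    norm_of_nonneg (inv_pos.2 hr).le, abs_of_pos (inv_pos.2 hr), smul_eq_mul] at hscale
  exact (mul_left_cancel₀ (inv_pos.2 hr).ne' hscale).symm

lemma stronglyMeasurable_hstable (hα : 0 < α) :
    StronglyMeasurable fun p : ℝ × ℝ => hstable α p.1 p.2 := by
  have hcont : Continuous fun q : (ℝ × ℝ) × ℝ =>
      stableCharFun α q.1.1 q.2 * Complex.exp (-(I * q.2 * q.1.2)) := by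
    have := continuous_stableSymbol hα
    unfold stableCharFun
    fun_prop
  simp_rw [hstable_eq_integral hα.ne']
  exact hcont.stronglyMeasurable.integral_prod_right.const_mul _

end StableDensity

section GreenKernel

variable {α β μ s : ℝ}

lemma integrable_fourier_stableCharFun (hα : 0 < α) (hcos : 0 < cos (π * α / 2)) (hs : 0 < s) :
    Integrable (𝓕 (stableCharFun α s)) := by
  have hscale := ((integrable_hstable hα hcos hs).comp_mul_left' two_pi_pos.ne').const_mul (2 * π)
  refine hscale.congr (.of_forall fun w => ?_)
  have hπ : (π : ℂ) ≠ 0 := mod_cast pi_ne_zero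
  simp only [hstable_eq_fourier hα.ne', mul_div_cancel_left₀ w two_pi_pos.ne']
  push_cast
  field_simp

theorem charTransform_hstable (hα : 0 < α) (hcos : 0 < cos (π * α / 2)) (hs : 0 < s) (τ : ℝ) :
    charTransform (hstable α s) τ = stableCharFun α s τ := by
  rw [funext (hstable_eq_fourier hα.ne' s)]
  exact charTransform_inv_two_pi_mul_fourier (continuous_stableCharFun hα)
    (integrable_stableCharFun hα hcos hs) (integrable_fourier_stableCharFun hα hcos hs) τ

/-- The unnormalized Gamma density `s ↦ s^{β-1} e^{-μs}`, which subordinates the stable densities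
`h_α(·, s)` to the Green kernel. -/
noncomputable def gammaWeight (β μ s : ℝ) : ℝ := s ^ (β - 1) * rexp (-μ * s)

lemma measurable_gammaWeight (β μ : ℝ) : Measurable (gammaWeight β μ) := by
  unfold gammaWeight
  fun_prop

lemma gammaWeight_nonneg (β μ : ℝ) (hs : 0 ≤ s) : 0 ≤ gammaWeight β μ s :=
  mul_nonneg (rpow_nonneg hs _) (exp_nonneg _)

lemma integrableOn_gammaWeight (hβ : 0 < β) (hμ : 0 < μ) :
    IntegrableOn (gammaWeight β μ) (Ioi 0) :=
  integrableOn_rpow_mul_exp_neg_mul (by linarith) hμ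

/-- The Green kernel of `(μ + d^α/d(-t)^α)^β`, up to the factor `1/Γ(β)`: the solution is
`X(t) = Γ(β)⁻¹ ∫ k(z) E(t + z) dz`. -/
noncomputable def greenKernel (α β μ z : ℝ) : ℂ :=
  ∫ s in Ioi 0, gammaWeight β μ s * hstable α s z

lemma integrable_gammaWeight_mul_hstable (hα : 0 < α) (hcos : 0 < cos (π * α / 2)) (hβ : 0 < β)
    (hμ : 0 < μ) :
    Integrable (Function.uncurry fun s z => (gammaWeight β μ s : ℂ) * hstable α s z)
      ((volume.restrict (Ioi 0)).prod volume) := by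
  have hmeas : AEStronglyMeasurable
      (Function.uncurry fun s z => (gammaWeight β μ s : ℂ) * hstable α s z)
      ((volume.restrict (Ioi 0)).prod volume) :=
    ((Complex.measurable_ofReal.comp (measurable_gammaWeight β μ)).comp
      measurable_fst).aestronglyMeasurable.mul (stronglyMeasurable_hstable hα).aestronglyMeasurable
  refine (integrable_prod_iff hmeas).2 ⟨?_, ?_⟩
  · filter_upwards [ae_restrict_mem measurableSet_Ioi] with s hs
    exact (integrable_hstable hα hcos hs).const_mul (gammaWeight β μ s : ℂ)
  · refine ((integrableOn_gammaWeight hβ hμ).mul_const (∫ z, ‖hstable α 1 z‖)).congr ?_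
    filter_upwards [ae_restrict_mem measurableSet_Ioi] with s (hs : 0 < s)
    simp only [Function.uncurry_apply_pair, norm_mul, integral_const_mul, Complex.norm_real,
      norm_of_nonneg (gammaWeight_nonneg β μ hs.le), integral_norm_hstable hα.ne' hs]

lemma integrable_greenKernel (hα : 0 < α) (hcos : 0 < cos (π * α / 2)) (hβ : 0 < β) (hμ : 0 < μ) :
    Integrable (greenKernel α β μ) :=
  (integrable_gammaWeight_mul_hstable hα hcos hβ hμ).integral_prod_right

lemma integral_gammaWeight_mul_exp_neg_mul (hβ : 0 < β) {l : ℂ} (hl : 0 < (μ + l).re) :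
    ∫ s in Ioi 0, gammaWeight β μ s * Complex.exp (-(s * l)) =
      (1 / (μ + l)) ^ (β : ℂ) * Gamma β := by
  rw [← Complex.Gamma_ofReal, ← integral_cpow_mul_exp_neg_mul_of_re_pos (by simpa) hl]
  refine setIntegral_congr_fun measurableSet_Ioi fun s (hs : 0 < s) => ?_
  rw [gammaWeight, Complex.ofReal_mul, Complex.ofReal_cpow hs.le, Complex.ofReal_exp, mul_assoc,
    ← Complex.exp_add]
  push_cast
  ring_nf

lemma re_add_stableSymbol_pos (hα : α ≠ 0) (hcos : 0 < cos (π * α / 2)) (hμ : 0 < μ) (τ : ℝ) :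
    0 < (μ + stableSymbol α τ).re := by
  rw [Complex.add_re, re_stableSymbol hα, Complex.ofReal_re]
  positivity

theorem charTransform_greenKernel (hα : 0 < α) (hcos : 0 < cos (π * α / 2)) (hβ : 0 < β)
    (hμ : 0 < μ) (τ : ℝ) :
    charTransform (greenKernel α β μ) τ =
      (1 / (μ + stableSymbol α τ)) ^ (β : ℂ) * Gamma β := by
  rw [← integral_gammaWeight_mul_exp_neg_mul hβ (re_add_stableSymbol_pos hα.ne' hcos hμ τ)]
  refine (charTransform_integral (integrable_gammaWeight_mul_hstable hα hcos hβ hμ) τ).trans ?_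
  refine setIntegral_congr_fun measurableSet_Ioi fun s hs => ?_
  simp only [charTransform_const_mul, charTransform_hstable hα hcos hs, stableCharFun]

lemma charTransform_greenKernel_mul_neg (hα : 0 < α) (hcos : 0 < cos (π * α / 2)) (hβ : 0 < β)
    (hμ : 0 < μ) (τ : ℝ) :
    charTransform (greenKernel α β μ) τ * charTransform (greenKernel α β μ) (-τ) =
      ((Gamma β ^ 2 /
        (μ ^ 2 + 2 * μ * |τ| ^ α * cos (π * α / 2) + |τ| ^ (2 * α)) ^ β : ℝ) : ℂ) := by
  have hconj : (μ + stableSymbol α (-τ) : ℂ) = starRingEnd ℂ (μ + stableSymbol α τ) := by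
    rw [stableSymbol_neg, map_add, Complex.conj_ofReal]
  have hprod := one_div_cpow_mul_one_div_conj_cpow (re_add_stableSymbol_pos hα.ne' hcos hμ τ) β
  rw [← normSq_add_stableSymbol hα.ne', charTransform_greenKernel hα hcos hβ hμ,
    charTransform_greenKernel hα hcos hβ hμ, hconj, mul_mul_mul_comm, hprod]
  push_cast
  ring

lemma gammaWeight_mul_crossCorrelation (s₁ s₂ h : ℝ) :
    ((s₁ ^ (β - 1) * s₂ ^ (β - 1) * rexp (-μ * (s₁ + s₂)) : ℝ) : ℂ) *
        ∫ z, hstable α s₁ z * hstable α s₂ (z - h) =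
      crossCorrelation (fun z => gammaWeight β μ s₁ * hstable α s₁ z)
        (fun z => gammaWeight β μ s₂ * hstable α s₂ z) h := by
  have hweight : s₁ ^ (β - 1) * s₂ ^ (β - 1) * rexp (-μ * (s₁ + s₂)) =
      gammaWeight β μ s₁ * gammaWeight β μ s₂ := by
    rw [gammaWeight, gammaWeight, mul_add, exp_add]
    ring
  rw [hweight, crossCorrelation, ← integral_const_mul]
  congr with z
  push_cast
  ring

end GreenKernel

theorem stmt16_general {α μ β : ℝ} (σ : ℝ) (hα : 0 < α) (hcos : 0 < Real.cos (Real.pi * α / 2))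
    (hμ : 0 < μ) (hβ : 0 < β) (Cov : ℝ → ℂ)
    (hCov : ∀ h : ℝ, Cov h =
      ((σ ^ 2 / (Real.Gamma β) ^ 2 : ℝ) : ℂ) *
        ∫ s₁ in Set.Ioi (0 : ℝ), ∫ s₂ in Set.Ioi (0 : ℝ),
          ((s₁ ^ (β - 1) * s₂ ^ (β - 1) * Real.exp (-μ * (s₁ + s₂)) : ℝ) : ℂ) *
            ∫ z : ℝ, hstable α s₁ z * hstable α s₂ (z - h)) (τ : ℝ) :
    Integrable (fun h : ℝ => Complex.exp (Complex.I * τ * h) * Cov h) ∧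
      ∫ h : ℝ, Complex.exp (Complex.I * τ * h) * Cov h =
        ((σ ^ 2 /
          (μ ^ 2 + 2 * μ * |τ| ^ α * Real.cos (Real.pi * α / 2) + |τ| ^ (2 * α)) ^ β
          : ℝ) : ℂ) := by
  let k := greenKernel α β μ
  have hk : Integrable k := integrable_greenKernel hα hcos hβ hμ
  have hF := integrable_gammaWeight_mul_hstable hα hcos hβ hμ
  have hCov_ae : Cov =ᵐ[volume] fun h => (σ ^ 2 / Gamma β ^ 2 : ℝ) * crossCorrelation k k h := by
    filter_upwards [ae_integral_integral_crossCorrelation hF hF] with h hh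
    simp_rw [hCov, gammaWeight_mul_crossCorrelation, hh]
    rfl
  have hCov_int : Integrable Cov :=
    ((integrable_crossCorrelation hk hk).const_mul _).congr hCov_ae.symm
  refine ⟨integrable_exp_I_mul_mul hCov_int measurable_id τ, ?_⟩
  have hΓ : Gamma β ≠ 0 := (Gamma_pos_of_pos hβ).ne'
  calc charTransform Cov τ
      = (σ ^ 2 / Gamma β ^ 2 : ℝ) * (charTransform k τ * charTransform k (-τ)) := by
        rw [charTransform_congr_ae hCov_ae, charTransform_const_mul,
          charTransform_crossCorrelation hk hk]
    _ = _ := by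
        rw [charTransform_greenKernel_mul_neg hα hcos hβ hμ, ← Complex.ofReal_mul]
        field_simp

/-- The spectral function of the solution to `(μ + d^α/d(−t)^α)^β X(t) = E(t)`:
the Fourier transform of the autocovariance function `Cov` equals
`σ²/(μ² + 2μ|τ|^α cos(πα/2) + |τ|^{2α})^β`. -/
theorem stmt16 (α μ β σ : ℝ) (hα : α ∈ Set.Ioo (0 : ℝ) 1) (hμ : 0 < μ) (hβ : 0 < β)
    (hσ : 0 < σ) (Cov : ℝ → ℂ)
    (hCov : ∀ h : ℝ, Cov h =
      ((σ ^ 2 / (Real.Gamma β) ^ 2 : ℝ) : ℂ) *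
        ∫ s₁ in Set.Ioi (0 : ℝ), ∫ s₂ in Set.Ioi (0 : ℝ),
          ((s₁ ^ (β - 1) * s₂ ^ (β - 1) * Real.exp (-μ * (s₁ + s₂)) : ℝ) : ℂ) *
            ∫ z : ℝ, hstable α s₁ z * hstable α s₂ (z - h)) :
    ∀ τ : ℝ,
      Integrable (fun h : ℝ => Complex.exp (Complex.I * τ * h) * Cov h) ∧
      ∫ h : ℝ, Complex.exp (Complex.I * τ * h) * Cov h =
        ((σ ^ 2 /
          (μ ^ 2 + 2 * μ * |τ| ^ α * Real.cos (Real.pi * α / 2) + |τ| ^ (2 * α)) ^ β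
          : ℝ) : ℂ) := by
  have hcos : 0 < Real.cos (Real.pi * α / 2) :=
    cos_pos_of_mem_Ioo ⟨by nlinarith [pi_pos, hα.1], by nlinarith [pi_pos, hα.2]⟩
  exact stmt16_general σ hα.1 hcos hμ hβ Cov hCov
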